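/- Let (M², g) be a complete Riemannian surface homeomorphic to ℝ², and let F be a foliation of M all of whose leaves are geodesic lines. Then F is homeomorphic to the standard foliation of the Euclidean plane ℝ² by parallel straight lines, i.e. there is a homeomorphism of M onto ℝ² carrying leaves of F to parallel straight lines. -/

import Mathlib

open Set Filter MeasureTheory Metric
open scoped ENNReal NNReal Topology

/-- A (geodesic) line in a metric space: a map `γ : ℝ → X` with
`d(γ s, γ t) = |s - t|` for all `s, t`, i.e. an isometric embedding of `ℝ`
(in a Riemannian manifold such a curve is automatically a geodesic that
minimizes the distance between any two of its points). -/
def IsLine {X : Type} [MetricSpace X] (γ : ℝ → X) : Prop :=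
  ∀ s t : ℝ, dist (γ s) (γ t) = |s - t|

/-- A (geodesic) ray: a map `γ : ℝ → X` with `d(γ s, γ t) = |s - t|`
for all `s, t ≥ 0`, i.e. an isometric embedding of `[0, ∞)`. -/
def IsRay {X : Type} [MetricSpace X] (γ : ℝ → X) : Prop :=
  ∀ s t : ℝ, 0 ≤ s → 0 ≤ t → dist (γ s) (γ t) = |s - t|

/-- A minimizing (unit-speed) geodesic segment defined on `[a, b]`. -/
def IsMinimizingSegment {X : Type} [MetricSpace X] (σ : ℝ → X) (a b : ℝ) : Prop :=
  ∀ s ∈ Set.Icc a b, ∀ t ∈ Set.Icc a b, dist (σ s) (σ t) = |s - t|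

/-- Two rays are asymptotes if they stay within bounded distance of each other. -/
def Asymptotic {X : Type} [MetricSpace X] (γ σ : ℝ → X) : Prop :=
  ∃ C : ℝ, 0 < C ∧ ∀ t : ℝ, 0 ≤ t → dist (γ t) (σ t) ≤ C

/-- A set is geodesically convex if every minimizing geodesic segment
between two of its points is contained in it. -/
def GeodesicallyConvex {X : Type} [MetricSpace X] (A : Set X) : Prop :=
  ∀ (σ : ℝ → X) (a b : ℝ), a ≤ b → IsMinimizingSegment σ a b →
    σ a ∈ A → σ b ∈ A → ∀ t ∈ Set.Icc a b, σ t ∈ A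

/-- Abstract packaging of a complete Riemannian surface: the underlying metric
space of the Riemannian metric, together with its geodesics, its Gaussian
curvature, its Riemannian area measure, the Riemannian angle, and the
(differential-geometric, hence here abstractly recorded) property of having
no conjugate points. -/
structure RiemannianSurface where
  /-- the underlying set of points -/
  M : Type
  /-- the distance function induced by the Riemannian metric -/
  [metric : MetricSpace M]
  [mble : MeasurableSpace M]
  borel : BorelSpace M
  /-- the Riemannian metric is complete -/
  complete : CompleteSpace M
  /-- the complete unit-speed geodesics of the Riemannian metric -/
  IsGeodesic : (ℝ → M) → Prop
  /-- the unit-speed geodesic segments `σ : [a, b] → M` of the Riemannian metric -/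
  IsGeodesicSegment : (ℝ → M) → ℝ → ℝ → Prop
  /-- a metric line is a (complete, globally minimizing) geodesic -/
  line_isGeodesic : ∀ γ : ℝ → M, IsLine γ → IsGeodesic γ
  /-- the restriction of a complete geodesic to an interval is a geodesic segment -/
  geodesic_isGeodesicSegment : ∀ (γ : ℝ → M) (a b : ℝ), IsGeodesic γ → IsGeodesicSegment γ a b
  /-- a minimizing segment is a geodesic segment -/
  minimizing_isGeodesicSegment : ∀ (σ : ℝ → M) (a b : ℝ),
    IsMinimizingSegment σ a b → IsGeodesicSegment σ a b
  /-- the Gaussian curvature -/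
  K : M → ℝ
  /-- the Riemannian area measure -/
  area : MeasureTheory.Measure M
  /-- `angle p x y` is the angle `∠ₚ(x, y)` at `p` subtended by `x` and `y`
  (the angle at `p` between the initial directions of minimizing geodesics
  from `p` to `x` and to `y`) -/
  angle : M → M → M → ℝ
  /-- the Riemannian metric has no conjugate points: no geodesic contains a pair
  of mutually conjugate points -/
  NoConjugatePoints : Prop

attribute [instance] RiemannianSurface.metric RiemannianSurface.mble

namespace RiemannianSurface

variable (S : RiemannianSurface)

/-- the total positive curvature `c₊(M) = ∫_M K⁺ dμ`, as an extended nonnegative real -/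
noncomputable def cPlus : ℝ≥0∞ := ∫⁻ x, ENNReal.ofReal (S.K x) ∂S.area

/-- `∫_M (-K⁻) dμ = -c₋(M)`, the absolute value of the total negative curvature,
as an extended nonnegative real -/
noncomputable def cMinus : ℝ≥0∞ := ∫⁻ x, ENNReal.ofReal (-S.K x) ∂S.area

/-- `M` admits total curvature if at least one of `c₊(M)`, `c₋(M)` is finite -/
def AdmitsTotalCurvature : Prop := S.cPlus ≠ ⊤ ∨ S.cMinus ≠ ⊤

/-- the total curvature `c(M) = c₊(M) + c₋(M) = ∫_M K dμ`, as an extended real -/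
noncomputable def totalCurvature : EReal := (S.cPlus : EReal) - (S.cMinus : EReal)

/-- the total curvature `c(A) = ∫_A K dμ` of a region `A ⊆ M`, as an extended real -/
noncomputable def cOn (A : Set S.M) : EReal :=
  ((∫⁻ x in A, ENNReal.ofReal (S.K x) ∂S.area : ℝ≥0∞) : EReal) -
    ((∫⁻ x in A, ENNReal.ofReal (-S.K x) ∂S.area : ℝ≥0∞) : EReal)

/-- `M` satisfies the visibility axiom at `p`: for every `ε > 0` there is `R > 0`
such that every geodesic segment staying at distance `> R` from `p` subtends an
angle at most `ε` at `p`. -/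
def VisibilityAt (p : S.M) : Prop :=
  ∀ ε : ℝ, 0 < ε → ∃ R : ℝ, 0 < R ∧
    ∀ (σ : ℝ → S.M) (a b : ℝ), a ≤ b → S.IsGeodesicSegment σ a b →
      (∀ t ∈ Set.Icc a b, R < dist p (σ t)) → S.angle p (σ a) (σ b) ≤ ε

end RiemannianSurface

/-- A foliation of the surface all of whose leaves are geodesic lines:
a partition of `M` into leaves, each of which is the image of a geodesic line,
which is locally trivial (each point has a foliated chart whose plaques lie
in the leaves). -/
structure GeodesicLineFoliation (S : RiemannianSurface) where
  /-- the leaves of the foliation -/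
  leaves : Set (Set S.M)
  covers : ∀ x : S.M, ∃ L ∈ leaves, x ∈ L
  eq_of_inter : ∀ L₁ ∈ leaves, ∀ L₂ ∈ leaves, (L₁ ∩ L₂).Nonempty → L₁ = L₂
  /-- every leaf is a geodesic line -/
  leaf_is_geodesic_line : ∀ L ∈ leaves,
    ∃ γ : ℝ → S.M, IsLine γ ∧ S.IsGeodesic γ ∧ Set.range γ = L
  /-- local triviality: foliated charts whose plaques lie in leaves -/
  locally_trivial : ∀ x : S.M, ∃ U : Set S.M, IsOpen U ∧ x ∈ U ∧
    ∃ φ : ↥U ≃ₜ (ℝ × ℝ), ∀ c : ℝ, ∃ L ∈ leaves, ∀ t : ℝ, (φ.symm (t, c)).1 ∈ L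

/-- any two leaves of the foliation are at finite Hausdorff distance from each other -/
def GeodesicLineFoliation.BoundedHausdorffDistance {S : RiemannianSurface}
    (F : GeodesicLineFoliation S) : Prop :=
  ∀ L₁ ∈ F.leaves, ∀ L₂ ∈ F.leaves, EMetric.hausdorffEdist L₁ L₂ ≠ ⊤

/-!
The leaf space `Q` of a foliation of the plane is a one-manifold, but in general not a Hausdorff
one. It is Hausdorff when the leaves are geodesic lines: any three points of a line are collinear in
the metric sense, and this is a closed condition, so any point of a leaf not separated from a leaf
`γ` would be collinear with all pairs of points of `γ`, which is impossible.

Collapsing the complement of an arc of `Q` to a point gives a map from `Q` to the circle. As the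
plane is simply connected and the leaves are connected, this map lifts to `ℝ`, so that the
coordinate of the arc extends to a continuous *step function* from `Q` to `[0, 1]` which is
injective over `(0, 1)`. Two step functions never disagree about betweenness. Therefore the sum of
the weighted variations of countably many of them, measured from a base leaf and given opposite
signs on its two sides, is a coordinate on `Q`, which is thus homeomorphic to `ℝ`.

The surface is now a bundle of lines over `ℝ`. On a leaf, arc length can be read off from the
distances to two points, so the leaves over a small interval carry arc length coordinates which are
jointly continuous. Adjusting them by isometries of `ℝ` one glues them to a global coordinate, and
with the coordinate of `Q` it forms the desired homeomorphism.
-/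

section OpenLeafSpace

open Topology

theorem isOpenEmbedding_of_continuous_injective {f : ℝ → ℝ} (hf : Continuous f)
    (hinj : Function.Injective f) : IsOpenEmbedding f := by
  have of_strictMono {g : ℝ → ℝ} (hg : Continuous g) (hmono : StrictMono g) :
      IsOpenEmbedding g := by
    have hord : (range g).OrdConnected := (isPreconnected_range hg).ordConnected
    refine ⟨hmono.isEmbedding_of_ordConnected hord, isOpen_iff_mem_nhds.2 ?_⟩
    rintro _ ⟨x, rfl⟩
    exact mem_of_superset (Ioo_mem_nhds (hmono (sub_one_lt x)) (hmono (lt_add_one x)))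
      (Ioo_subset_Icc_self.trans (hord.out (mem_range_self _) (mem_range_self _)))
  rcases hf.strictMono_of_inj hinj with hmono | hanti
  · exact of_strictMono hf hmono
  · have hneg := of_strictMono hf.neg hanti.neg
    simpa [Function.comp_def] using (Homeomorph.neg ℝ).isOpenEmbedding.comp hneg

variable {X : Type*} [TopologicalSpace X]

theorem isOpen_preimage_range_of_range_subset {γ η : ℝ → X} (hγ : IsEmbedding γ)
    (hη : Continuous η) (hinj : Function.Injective η) (hsub : range η ⊆ range γ) :
    IsOpen (γ ⁻¹' range η) := by
  choose a ha using fun t => hsub (mem_range_self t)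
  have hγa : γ ∘ a = η := funext ha
  have ha_cont : Continuous a := hγ.continuous_iff.2 (hγa ▸ hη)
  have ha_inj : Function.Injective a := .of_comp (hγa ▸ hinj)
  have hpre : γ ⁻¹' range η = range a := by
    rw [← hγa, range_comp, hγ.injective.preimage_image]
  exact hpre ▸ (isOpenEmbedding_of_continuous_injective ha_cont ha_inj).isOpen_range

/-- A foliated chart of the partition into classes of `r`, given by its inverse: an open embedding
of the plane sending each horizontal line (a plaque) into a single class. -/
structure IsFoliatedChart (r : Setoid X) (ψ : ℝ × ℝ → X) : Prop where
  isOpenEmbedding : IsOpenEmbedding ψ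
  rel : ∀ t t' c, r (ψ (t, c)) (ψ (t', c))

/-- The partition into classes of `r` is a one-dimensional foliation of a surface: every point lies
in a foliated chart. -/
def HasFoliatedCharts (r : Setoid X) : Prop :=
  ∀ x, ∃ ψ, IsFoliatedChart r ψ ∧ x ∈ range ψ

/-- Every leaf, i.e. every class of `r`, is an embedded copy of the real line. -/
def HasEmbeddedLeaves (r : Setoid X) : Prop :=
  ∀ x, ∃ γ : ℝ → X, IsEmbedding γ ∧ range γ = {y | r x y}

variable {r : Setoid X}

theorem IsFoliatedChart.isOpen_preimage_plaque {ψ : ℝ × ℝ → X} (hψ : IsFoliatedChart r ψ)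
    {γ : ℝ → X} (hγ : IsEmbedding γ) {x : X} (hrange : range γ = {y | r x y}) (c : ℝ) :
    IsOpen (γ ⁻¹' range fun t => ψ (t, c)) := by
  by_cases hx : r x (ψ (0, c))
  · refine isOpen_preimage_range_of_range_subset hγ
      (hψ.isOpenEmbedding.continuous.comp (by fun_prop))
      (hψ.isOpenEmbedding.injective.comp fun t t' h => congrArg Prod.fst h) ?_
    rintro _ ⟨t, rfl⟩
    exact hrange ▸ r.trans hx (hψ.rel 0 t c)
  · convert isOpen_empty
    refine eq_empty_of_forall_notMem ?_
    rintro s ⟨t, ht⟩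
    have hs : r x (γ s) := (hrange ▸ mem_range_self s : γ s ∈ {y | r x y})
    rw [← ht] at hs
    exact hx (r.trans hs (hψ.rel t 0 c))

theorem IsFoliatedChart.map_mk_nhds {ψ : ℝ × ℝ → X} (hψ : IsFoliatedChart r ψ) (t c : ℝ) :
    map (Quotient.mk r) (𝓝 (ψ (t, c))) = map (fun c => Quotient.mk r (ψ (0, c))) (𝓝 c) := by
  have hcomp : Quotient.mk r ∘ ψ = (fun c => Quotient.mk r (ψ (0, c))) ∘ Prod.snd :=
    funext fun u => Quotient.sound (hψ.rel u.1 0 u.2)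
  rw [← hψ.isOpenEmbedding.map_nhds_eq, map_map, hcomp, ← map_map, map_snd_nhds]

theorem HasFoliatedCharts.map_mk_nhds_eq (hchart : HasFoliatedCharts r)
    (hleaf : HasEmbeddedLeaves r) {x y : X} (hxy : r x y) :
    map (Quotient.mk r) (𝓝 x) = map (Quotient.mk r) (𝓝 y) := by
  obtain ⟨γ, hγ, hrange⟩ := hleaf x
  have hconst : IsLocallyConstant fun s => map (Quotient.mk r) (𝓝 (γ s)) := by
    rw [IsLocallyConstant.iff_eventually_eq]
    intro s
    obtain ⟨ψ, hψ, ⟨t, c⟩, hs⟩ := hchart (γ s)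
    filter_upwards [(hψ.isOpen_preimage_plaque hγ hrange c).mem_nhds ⟨t, hs⟩]
    rintro s' ⟨t', hs'⟩
    rw [← hs, ← hs', hψ.map_mk_nhds, hψ.map_mk_nhds]
  obtain ⟨s, rfl⟩ : x ∈ range γ := hrange ▸ r.refl x
  obtain ⟨s', rfl⟩ : y ∈ range γ := hrange ▸ hxy
  exact hconst.apply_eq_of_preconnectedSpace s s'

theorem HasFoliatedCharts.isOpenMap_mk (hchart : HasFoliatedCharts r)
    (hleaf : HasEmbeddedLeaves r) : IsOpenMap (Quotient.mk r) := by
  intro V hV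
  rw [← isQuotientMap_quotient_mk'.isOpen_preimage, isOpen_iff_mem_nhds]
  rintro y ⟨v, hv, hvy⟩
  change Quotient.mk r '' V ∈ map (Quotient.mk r) (𝓝 y)
  rw [← hchart.map_mk_nhds_eq hleaf (Quotient.exact hvy)]
  exact image_mem_map (hV.mem_nhds hv)

theorem HasFoliatedCharts.isOpenQuotientMap_mk (hchart : HasFoliatedCharts r)
    (hleaf : HasEmbeddedLeaves r) : IsOpenQuotientMap (Quotient.mk r) :=
  ⟨Quotient.mk_surjective, continuous_quotient_mk', hchart.isOpenMap_mk hleaf⟩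

end OpenLeafSpace

section MetricCollinear

variable {X : Type*} [PseudoMetricSpace X]

/-- Collinearity in the metric sense: one of the three triangle inequalities is an equality. -/
def MetricCollinear (a b c : X) : Prop :=
  dist a b + dist b c = dist a c ∨ dist b a + dist a c = dist b c ∨ dist a c + dist c b = dist a b

theorem isClosed_metricCollinear :
    IsClosed {p : X × X × X | MetricCollinear p.1 p.2.1 p.2.2} :=
  (isClosed_eq (by fun_prop) (by fun_prop)).union
    ((isClosed_eq (by fun_prop) (by fun_prop)).union (isClosed_eq (by fun_prop) (by fun_prop)))

end MetricCollinear

section HausdorffLeafSpace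

variable {X : Type} [MetricSpace X] {r : Setoid X}

theorem IsLine.isometry {γ : ℝ → X} (hγ : IsLine γ) : Isometry γ :=
  Isometry.of_dist_eq fun s t => (hγ s t).trans (Real.dist_eq s t).symm

/-- Every leaf, i.e. every class of `r`, is the image of a geodesic line. -/
def LeavesAreLines (r : Setoid X) : Prop :=
  ∀ x, ∃ γ : ℝ → X, IsLine γ ∧ range γ = {y | r x y}

theorem LeavesAreLines.hasEmbeddedLeaves (hline : LeavesAreLines r) : HasEmbeddedLeaves r :=
  fun x => (hline x).imp fun _ h => ⟨h.1.isometry.isEmbedding, h.2⟩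

theorem IsLine.metricCollinear {γ : ℝ → X} (hγ : IsLine γ) (s t u : ℝ) :
    MetricCollinear (γ s) (γ t) (γ u) := by
  simp only [MetricCollinear, hγ s, hγ t, hγ u]
  grind

theorem LeavesAreLines.metricCollinear (hline : LeavesAreLines r) {a b c : X} (hab : r a b)
    (hac : r a c) : MetricCollinear a b c := by
  obtain ⟨γ, hγ, hrange⟩ := hline a
  obtain ⟨s, hs⟩ : a ∈ range γ := hrange ▸ r.refl a
  obtain ⟨t, ht⟩ : b ∈ range γ := hrange ▸ hab
  obtain ⟨u, hu⟩ : c ∈ range γ := hrange ▸ hac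
  exact hs ▸ ht ▸ hu ▸ hγ.metricCollinear s t u

theorem LeavesAreLines.metricCollinear_of_neBot (hline : LeavesAreLines r)
    (hopen : IsOpenMap (Quotient.mk r)) {a b c : X}
    (hne : (𝓝 (Quotient.mk r a) ⊓ 𝓝 (Quotient.mk r b) ⊓ 𝓝 (Quotient.mk r c)).NeBot) :
    MetricCollinear a b c := by
  by_contra hnot
  have hnhds : {p : X × X × X | MetricCollinear p.1 p.2.1 p.2.2}ᶜ ∈ 𝓝 (a, b, c) :=
    isClosed_metricCollinear.isOpen_compl.mem_nhds hnot
  obtain ⟨U, hU, VW, hVW, hUVW⟩ := mem_nhds_prod_iff.1 hnhds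
  obtain ⟨V, hV, W, hW, hVW_sub⟩ := mem_nhds_prod_iff.1 hVW
  obtain ⟨_, ⟨⟨u, hu, rfl⟩, v, hv, huv⟩, w, hw, huw⟩ :=
    Filter.nonempty_of_mem (inter_mem_inf (inter_mem_inf (hopen.image_mem_nhds hU)
      (hopen.image_mem_nhds hV)) (hopen.image_mem_nhds hW))
  exact hUVW (show (u, v, w) ∈ U ×ˢ VW from ⟨hu, hVW_sub ⟨hv, hw⟩⟩)
    (hline.metricCollinear (r.symm (Quotient.exact huv)) (r.symm (Quotient.exact huw)))

/- If the leaves of `x` and `y` were not separated, then `y` would be collinear with any two points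
of the leaf of `x`; but no such `y` off the leaf exists, as the two points of the leaf at distance
`dist x y` from `x` show. -/
theorem LeavesAreLines.t2Space_quotient (hline : LeavesAreLines r)
    (hopen : IsOpenMap (Quotient.mk r)) : T2Space (Quotient r) := by
  refine t2Space_iff_disjoint_nhds.2 (Quotient.ind₂ fun x y hxy => ?_)
  by_contra hdisj
  obtain ⟨γ, hγ, hrange⟩ := hline x
  have hleaf (s : ℝ) : Quotient.mk r (γ s) = Quotient.mk r x :=
    (Quotient.sound (hrange ▸ mem_range_self s : γ s ∈ {y | r x y})).symm
  have hcol (s t : ℝ) : MetricCollinear (γ s) y (γ t) := by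
    refine hline.metricCollinear_of_neBot hopen ?_
    rw [hleaf, hleaf, inf_right_comm, inf_idem]
    exact ⟨fun h => hdisj (disjoint_iff.2 h)⟩
  have hpos (t : ℝ) : 0 < dist (γ t) y :=
    dist_pos.2 fun h => hxy (by rw [← h, hleaf])
  obtain ⟨s, rfl⟩ : x ∈ range γ := hrange ▸ r.refl x
  set ρ := dist (γ s) y
  have hρ_pos : 0 < ρ := hpos s
  have hfar (t : ℝ) (ht : |s - t| = ρ) : dist (γ t) y = 2 * ρ := by
    have hst : dist (γ s) (γ t) = ρ := (hγ s t).trans ht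
    rcases hcol s t with h | h | h <;>
      linarith [hpos t, dist_comm y (γ s), dist_comm y (γ t)]
  have hfar₁ := hfar (s + ρ) (by rw [sub_add_cancel_left, abs_neg, abs_of_pos hρ_pos])
  have hfar₂ := hfar (s - ρ) (by rw [sub_sub_cancel, abs_of_pos hρ_pos])
  have hdist : dist (γ (s + ρ)) (γ (s - ρ)) = 2 * ρ := by
    rw [hγ, abs_of_nonneg] <;> linarith
  rcases hcol (s + ρ) (s - ρ) with h | h | h <;>
    linarith [dist_comm y (γ (s + ρ)), dist_comm y (γ (s - ρ))]

end HausdorffLeafSpace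

section Transversals

open Topology

theorem exists_isOpenEmbedding_range_eq_ball {E : Type*} [NormedAddCommGroup E]
    [InnerProductSpace ℝ E] (c : E) {δ : ℝ} (hδ : 0 < δ) :
    ∃ e : E → E, IsOpenEmbedding e ∧ e 0 = c ∧ range e = ball c δ :=
  ⟨OpenPartialHomeomorph.univBall c δ,
    OpenPartialHomeomorph.isOpenEmbedding _ (OpenPartialHomeomorph.univBall_source c δ),
    OpenPartialHomeomorph.univBall_apply_zero c δ, by
      rw [← OpenPartialHomeomorph.univBall_target c hδ, ← image_univ,
        ← OpenPartialHomeomorph.univBall_source c δ, OpenPartialHomeomorph.image_source_eq_target]⟩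

theorem IsFoliatedChart.snd_eq_of_image_subset {X : Type*} [TopologicalSpace X] {r : Setoid X}
    {ψ : ℝ × ℝ → X} (hψ : IsFoliatedChart r ψ) {γ : ℝ → X} (hγ : IsEmbedding γ) {x : X}
    (hrange : range γ = {y | r x y}) {J : Set ℝ} (hJ : IsPreconnected J)
    (hsub : γ '' J ⊆ range ψ) {s t : ℝ} (hs : s ∈ J) (ht : t ∈ J) {u v : ℝ × ℝ}
    (hu : ψ u = γ s) (hv : ψ v = γ t) : u.2 = v.2 := by
  let P (c : ℝ) : Set ℝ := γ ⁻¹' range fun a => ψ (a, c)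
  have hP_open (c : ℝ) : IsOpen (P c) := hψ.isOpen_preimage_plaque hγ hrange c
  have hP_eq {c w : ℝ} {p : ℝ × ℝ} (hw : w ∈ P c) (hp : ψ p = γ w) : c = p.2 := by
    obtain ⟨a, ha⟩ := hw
    exact congrArg Prod.snd (hψ.isOpenEmbedding.injective (ha.trans hp.symm))
  have hcover : J ⊆ P u.2 ∪ ⋃ c ≠ u.2, P c := by
    intro w hw
    obtain ⟨⟨a, c⟩, hac⟩ := hsub (mem_image_of_mem γ hw)
    by_cases hc : c = u.2
    · exact .inl ⟨a, hc ▸ hac⟩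
    · exact .inr (mem_biUnion hc ⟨a, hac⟩)
  have hdisj : Disjoint (P u.2) (⋃ c ≠ u.2, P c) := by
    simp only [disjoint_iUnion_right]
    refine fun c hc => disjoint_left.2 fun w hw hwc => hc ?_
    obtain ⟨a, ha⟩ := hw
    exact hP_eq hwc (p := (a, u.2)) ha
  exact hP_eq (hJ.subset_left_of_subset_union (hP_open _)
    (isOpen_biUnion fun c _ => hP_open c) hdisj hcover ⟨s, hs, u.1, hu⟩ ht) hv

variable {X : Type} [MetricSpace X] {r : Setoid X}

theorem IsLine.image_uIcc_subset_ball {γ : ℝ → X} (hγ : IsLine γ) {x : X} {ε s t : ℝ}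
    (hs : γ s ∈ ball x ε) (ht : γ t ∈ ball x ε) : γ '' uIcc s t ⊆ ball x (3 * ε) := by
  rintro _ ⟨w, hw, rfl⟩
  have hws : dist (γ w) (γ s) ≤ dist (γ t) (γ s) := by
    rw [hγ, hγ]
    exact abs_sub_left_of_mem_uIcc hw
  rw [mem_ball] at *
  linarith [dist_triangle (γ w) (γ s) x, dist_triangle_right (γ t) (γ s) x]

/- Two nearby points of a vertical line of the chart lying on the same leaf are joined by a segment
of that leaf which stays in the chart, hence in a single plaque. -/
theorem LeavesAreLines.exists_injOn_mk_transversal (hline : LeavesAreLines r) {ψ : ℝ × ℝ → X}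
    (hψ : IsFoliatedChart r ψ) (t c : ℝ) :
    ∃ N ∈ 𝓝 c, InjOn (fun a => Quotient.mk r (ψ (t, a))) N := by
  have hrange_nhds : range ψ ∈ 𝓝 (ψ (t, c)) :=
    hψ.isOpenEmbedding.isOpen_range.mem_nhds (mem_range_self _)
  obtain ⟨ε, hε, hball⟩ := Metric.mem_nhds_iff.1 hrange_nhds
  have hcont : Continuous fun a => ψ (t, a) :=
    hψ.isOpenEmbedding.continuous.comp (by fun_prop)
  refine ⟨_, hcont.continuousAt.preimage_mem_nhds (ball_mem_nhds _ (div_pos hε three_pos)),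
    fun a ha b hb hab => ?_⟩
  obtain ⟨γ, hγ, hrange⟩ := hline (ψ (t, a))
  obtain ⟨s₁, hs₁⟩ : ψ (t, a) ∈ range γ := hrange ▸ r.refl _
  obtain ⟨s₂, hs₂⟩ : ψ (t, b) ∈ range γ := hrange ▸ Quotient.exact hab
  have hsub : γ '' uIcc s₁ s₂ ⊆ range ψ := by
    rw [mem_preimage, ← hs₁] at ha
    rw [mem_preimage, ← hs₂] at hb
    refine (hγ.image_uIcc_subset_ball ha hb).trans ?_
    rwa [mul_div_cancel₀ ε three_ne_zero]
  exact hψ.snd_eq_of_image_subset hγ.isometry.isEmbedding hrange isPreconnected_uIcc hsub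
    left_mem_uIcc right_mem_uIcc hs₁.symm hs₂.symm

theorem LeavesAreLines.exists_transversal (hline : LeavesAreLines r)
    (hchart : HasFoliatedCharts r) (x : X) :
    ∃ τ : ℝ → X, Continuous τ ∧ τ 0 = x ∧ IsOpenEmbedding fun a => Quotient.mk r (τ a) := by
  obtain ⟨ψ, hψ, ⟨t, c⟩, rfl⟩ := hchart x
  obtain ⟨N, hN, hinj⟩ := hline.exists_injOn_mk_transversal hψ t c
  obtain ⟨δ, hδ, hδN⟩ := Metric.mem_nhds_iff.1 hN
  obtain ⟨e, he, he0, hrange⟩ := exists_isOpenEmbedding_range_eq_ball c hδ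
  have hcont : Continuous fun a => ψ (t, a) := hψ.isOpenEmbedding.continuous.comp (by fun_prop)
  have hopen : IsOpenMap fun a => Quotient.mk r (ψ (t, a)) := by
    refine .of_comp (continuous_snd (X := ℝ)) Prod.snd_surjective ?_
    have hcomp : (fun a => Quotient.mk r (ψ (t, a))) ∘ Prod.snd = Quotient.mk r ∘ ψ :=
      funext fun u => Quotient.sound (hψ.rel t u.1 u.2)
    rw [hcomp]
    exact (hchart.isOpenMap_mk hline.hasEmbeddedLeaves).comp hψ.isOpenEmbedding.isOpenMap
  refine ⟨fun a => ψ (t, e a), hcont.comp he.continuous, congrArg (fun a => ψ (t, a)) he0,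
    .of_continuous_injective_isOpenMap (continuous_quotient_mk'.comp (hcont.comp he.continuous))
      (fun a b hab => he.injective (hinj ?_ ?_ hab)) (hopen.comp he.isOpenMap)⟩
  all_goals exact hδN (hrange ▸ mem_range_self _)

end Transversals

section StepFunctions

open Topology

theorem exists_lift_of_isQuotientMap {E B X Q : Type*} [TopologicalSpace E] [TopologicalSpace B]
    [TopologicalSpace X] [TopologicalSpace Q] [SimplyConnectedSpace X]
    [LocallyPathConnectedSpace X] {p : E → B} (hp : IsCoveringMap p) {π : X → Q}
    (hπ : IsQuotientMap π) (hfiber : ∀ q, IsPreconnected (π ⁻¹' {q})) {F : Q → B}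
    (hF : Continuous F) {e₀ : E} {q₀ : Q} (h₀ : p e₀ = F q₀) :
    ∃ g : Q → E, Continuous g ∧ g q₀ = e₀ ∧ p ∘ g = F := by
  obtain ⟨x₀, rfl⟩ := hπ.surjective q₀
  obtain ⟨G, ⟨hG₀, hG⟩, -⟩ := hp.existsUnique_continuousMap_lifts
    ⟨F ∘ π, hF.comp hπ.continuous⟩ x₀ e₀ h₀
  have hfactors : Function.FactorsThrough G π := fun x y hxy =>
    hp.constOn_of_comp (hfiber (π x)) G.continuous.continuousOn
      (fun a ha b hb => (congrFun hG a).trans <|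
        (congrArg F (ha.trans hb.symm)).trans (congrFun hG b).symm) rfl hxy.symm
  obtain ⟨g, hg⟩ : ∃ g, g ∘ π = G :=
    ⟨fun q => G (Function.surjInv hπ.surjective q), funext fun x =>
      hfactors (Function.surjInv_eq hπ.surjective (π x))⟩
  refine ⟨g, hπ.continuous_iff.2 (hg ▸ G.continuous), (congrFun hg x₀).trans hG₀, ?_⟩
  refine hπ.surjective.injective_comp_right ?_
  change p ∘ (g ∘ π) = F ∘ π
  rw [hg]
  exact hG

theorem exists_collapse_to_circle {Q : Type*} [TopologicalSpace Q] [T2Space Q] {e : ℝ → Q}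
    (he : IsOpenEmbedding e) :
    ∃ F : Q → UnitAddCircle, Continuous F ∧ (∀ t ∈ Icc (0 : ℝ) 1, F (e t) = t) ∧
      ∀ q ∉ e '' Ioo 0 1, F q = 0 := by
  let φ (t : ℝ) : UnitAddCircle := (projIcc (0 : ℝ) 1 zero_le_one t : ℝ)
  have hφ : Continuous φ :=
    (AddCircle.continuous_mk' 1).comp (continuous_subtype_val.comp continuous_projIcc)
  have hφ_zero {t : ℝ} (ht : t ∉ Ioo (0 : ℝ) 1) : φ t = 0 := by
    rcases le_or_gt t 0 with h0 | h0
    · simp only [φ, projIcc_of_le_left zero_le_one h0, AddCircle.coe_zero]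
    · have h1 : 1 ≤ t := not_lt.1 fun h1 => ht ⟨h0, h1⟩
      simp only [φ, projIcc_of_right_le zero_le_one h1, AddCircle.coe_period]
  let F : Q → UnitAddCircle := Function.extend e φ 0
  have hFe (t : ℝ) : F (e t) = φ t := he.injective.extend_apply φ _ t
  have hF_zero : ∀ q ∉ e '' Ioo 0 1, F q = 0 := by
    intro q hq
    by_cases hqe : ∃ t, e t = q
    · obtain ⟨t, rfl⟩ := hqe
      exact (hFe t).trans (hφ_zero fun ht => hq (mem_image_of_mem e ht))
    · exact Function.extend_apply' φ _ q hqe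
  refine ⟨F, continuous_iff_continuousAt.2 fun q => ?_, fun t ht => ?_, hF_zero⟩
  · by_cases hq : q ∈ e '' Icc 0 1
    · obtain ⟨t, -, rfl⟩ := hq
      exact he.continuousAt_iff.1 (hφ.continuousAt.congr (.of_forall fun t => (hFe t).symm))
    · have hclosed : IsClosed (e '' Icc 0 1) := (isCompact_Icc.image he.continuous).isClosed
      refine (continuousAt_const (y := (0 : UnitAddCircle))).congr ?_
      filter_upwards [hclosed.isOpen_compl.mem_nhds hq] with q' hq'
      exact (hF_zero q' fun h => hq' (image_mono Ioo_subset_Icc_self h)).symm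
  · rw [hFe]
    simp only [φ, projIcc_of_mem zero_le_one ht]

/-- A step function: a continuous function with values in the unit interval which, over the open
interval, is the inverse of an arc. It climbs from `0` to `1` along that arc and is locally
constant elsewhere; such functions play the role of local coordinates that extend globally. -/
structure IsStepFunction {Q : Type*} [TopologicalSpace Q] (f : Q → ℝ) : Prop where
  continuous : Continuous f
  mem_Icc : ∀ q, f q ∈ Icc 0 1
  exists_arc : ∃ e : ℝ → Q, IsOpenEmbedding e ∧ (∀ t ∈ Icc 0 1, f (e t) = t) ∧
    ∀ q, f q ∈ Ioo 0 1 → e (f q) = q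

theorem exists_isStepFunction {X Q : Type*} [TopologicalSpace X] [TopologicalSpace Q]
    [SimplyConnectedSpace X] [LocallyPathConnectedSpace X] [T2Space Q] {π : X → Q}
    (hπ : IsQuotientMap π) (hfiber : ∀ q, IsPreconnected (π ⁻¹' {q})) {e : ℝ → Q}
    (he : IsOpenEmbedding e) :
    ∃ f : Q → ℝ, IsStepFunction f ∧ ∀ t ∈ Icc 0 1, f (e t) = t := by
  obtain ⟨F, hF, hFe, hF_zero⟩ := exists_collapse_to_circle he
  have hcover : IsCoveringMap ((↑) : ℝ → UnitAddCircle) := AddCircle.isCoveringMap_coe 1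
  obtain ⟨g, hg, hg₀, hgF⟩ := exists_lift_of_isQuotientMap hcover hπ hfiber hF
    (hFe 0 (left_mem_Icc.2 zero_le_one)).symm
  have hge : EqOn (g ∘ e) id (Icc 0 1) :=
    hcover.eqOn_of_comp_eqOn isPreconnected_Icc (hg.comp he.continuous).continuousOn
      continuousOn_id (fun t ht => (congrFun hgF (e t)).trans (hFe t ht))
      (left_mem_Icc.2 zero_le_one) hg₀
  let f (q : Q) : ℝ := projIcc (0 : ℝ) 1 zero_le_one (g q)
  have hfe (t : ℝ) (ht : t ∈ Icc (0 : ℝ) 1) : f (e t) = t := by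
    have hgt : g (e t) = t := hge ht
    simp only [f, hgt, projIcc_of_mem zero_le_one ht]
  refine ⟨f, ⟨continuous_subtype_val.comp (continuous_projIcc.comp hg),
    fun q => (projIcc (0 : ℝ) 1 zero_le_one (g q)).2, e, he, hfe, fun q hq => ?_⟩, hfe⟩
  have hgq : g q ∈ Ioo 0 1 := by
    refine ⟨?_, ?_⟩ <;> by_contra! h
    · exact hq.1.ne' (by simp only [f, projIcc_of_le_left zero_le_one h])
    · exact hq.2.ne (by simp only [f, projIcc_of_right_le zero_le_one h])
  have hFq : F q ≠ 0 := by
    rw [← hgF]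
    refine fun h => hgq.1.ne' ((AddCircle.coe_eq_coe_iff_of_mem_Ico (p := (1 : ℝ)) (a := 0)
      ?_ ?_).1 h) <;> simp [hgq.1.le, hgq.2]
  obtain ⟨t, ht, rfl⟩ : q ∈ e '' Ioo 0 1 := not_imp_comm.1 (hF_zero q) hFq
  rw [hfe t (Ioo_subset_Icc_self ht)]

end StepFunctions

namespace IsStepFunction

open Topology

variable {Q : Type*} [TopologicalSpace Q] {f h : Q → ℝ}

theorem eq_of_apply_eq (hf : IsStepFunction f) {x y : Q} (hx : f x ∈ Ioo 0 1) (hxy : f x = f y) :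
    x = y := by
  obtain ⟨e, -, -, he⟩ := hf.exists_arc
  rw [← he x hx, ← he y (hxy ▸ hx), hxy]

theorem one_sub (hf : IsStepFunction f) : IsStepFunction fun q => 1 - f q where
  continuous := continuous_const.sub hf.continuous
  mem_Icc q := ⟨sub_nonneg.2 (hf.mem_Icc q).2, sub_le_self 1 (hf.mem_Icc q).1⟩
  exists_arc := by
    obtain ⟨e, he, hfe, hef⟩ := hf.exists_arc
    refine ⟨fun t => e (1 - t), he.comp (Homeomorph.subLeft (1 : ℝ)).isOpenEmbedding,
      fun t ht => ?_, fun q hq => ?_⟩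
    · rw [hfe _ ⟨sub_nonneg.2 ht.2, sub_le_self 1 ht.1⟩, sub_sub_cancel]
    · dsimp only
      rw [sub_sub_cancel, hef q ⟨by linarith [hq.2], by linarith [hq.1]⟩]

theorem exists_isOpenEmbedding_range_eq (hf : IsStepFunction f) {a b : ℝ} (ha : 0 ≤ a)
    (hab : a < b) (hb : b ≤ 1) :
    ∃ ε : ℝ → Q, IsOpenEmbedding ε ∧ range ε = f ⁻¹' Ioo a b := by
  obtain ⟨e, he, hfe, hef⟩ := hf.exists_arc
  obtain ⟨i, hi, -, hi_range⟩ :=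
    exists_isOpenEmbedding_range_eq_ball ((a + b) / 2) (half_pos (sub_pos.2 hab))
  have hsub : Ioo a b ⊆ Ioo 0 1 := Ioo_subset_Ioo ha hb
  refine ⟨e ∘ i, he.comp hi, ?_⟩
  rw [range_comp, hi_range, ← Real.Ioo_eq_ball]
  ext q
  constructor
  · rintro ⟨t, ht, rfl⟩
    rwa [mem_preimage, hfe t (Ioo_subset_Icc_self (hsub ht))]
  · exact fun hq => ⟨f q, hq, hef q (hsub hq)⟩

/- The half `{m ≤ f}` of `Q` is a retract: send everything else to the point where `f = m`. -/
theorem isPreconnected_setOf_le [PreconnectedSpace Q] (hf : IsStepFunction f) {m : ℝ}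
    (hm : m ∈ Ioo 0 1) : IsPreconnected {q | m ≤ f q} := by
  obtain ⟨e, -, hfe, -⟩ := hf.exists_arc
  have hfm : f (e m) = m := hfe m (Ioo_subset_Icc_self hm)
  have hcont : Continuous fun q => if m ≤ f q then q else e m := by
    refine continuous_id.if_le continuous_const continuous_const hf.continuous fun q hq => ?_
    exact (hf.eq_of_apply_eq (hfm.symm ▸ hm) (hfm.trans hq)).symm
  convert isPreconnected_range hcont
  ext q
  constructor
  · exact fun hq => ⟨q, if_pos hq⟩
  · rintro ⟨p, rfl⟩
    dsimp only
    split_ifs with hp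
    exacts [hp, hfm.ge]

theorem min_le_of_mem_uIcc [PreconnectedSpace Q] (hf : IsStepFunction f) (hh : IsStepFunction h)
    {x y z : Q} (hx : f x ∈ Ioo 0 1) (hxyz : f x ∈ uIcc (f y) (f z)) : min (h y) (h z) ≤ h x := by
  by_contra! hlt
  obtain ⟨m, hxm, hm⟩ := exists_between hlt
  have hm' : m ∈ Ioo 0 1 :=
    ⟨(hh.mem_Icc x).1.trans_lt hxm, hm.trans_le ((min_le_left _ _).trans (hh.mem_Icc y).2)⟩
  have hord : (f '' {q | m ≤ h q}).OrdConnected :=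
    ((hh.isPreconnected_setOf_le hm').image f hf.continuous.continuousOn).ordConnected
  obtain ⟨q, hq, hqx⟩ : f x ∈ f '' {q | m ≤ h q} :=
    hord.uIcc_subset (mem_image_of_mem f (hm.le.trans (min_le_left _ _)))
      (mem_image_of_mem f (hm.le.trans (min_le_right _ _))) hxyz
  rw [← hf.eq_of_apply_eq hx hqx.symm] at hq
  exact hxm.not_ge hq

theorem mem_uIcc [PreconnectedSpace Q] (hf : IsStepFunction f) (hh : IsStepFunction h) {x y z : Q}
    (hx : f x ∈ Ioo 0 1) (hxyz : f x ∈ uIcc (f y) (f z)) : h x ∈ uIcc (h y) (h z) := by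
  have hmax := hf.min_le_of_mem_uIcc hh.one_sub hx hxyz
  rw [min_sub_sub_left] at hmax
  exact ⟨hf.min_le_of_mem_uIcc hh hx hxyz, by linarith⟩

end IsStepFunction

section StepDistance

open Topology

variable {Q : Type*} {f : ℕ → Q → ℝ} {k : ℕ} {x y z : Q}

/-- The weighted total variation, between `z` and `x`, of a sequence of step functions. -/
noncomputable def stepDist (f : ℕ → Q → ℝ) (z x : Q) : ℝ :=
  ∑' n, (1 / 2 : ℝ) ^ n * |f n x - f n z|

theorem stepDist_self (f : ℕ → Q → ℝ) (z : Q) : stepDist f z z = 0 := by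
  simp [stepDist]

theorem stepDist_nonneg (f : ℕ → Q → ℝ) (z x : Q) : 0 ≤ stepDist f z x :=
  tsum_nonneg fun _ => by positivity

/-- The function `stepDist f z`, with a sign telling on which side of `z` the point lies according
to the step function `f k`; it is a global coordinate on `Q`. -/
noncomputable def signedStepDist (f : ℕ → Q → ℝ) (k : ℕ) (z x : Q) : ℝ :=
  if f k z ≤ f k x then stepDist f z x else -stepDist f z x

theorem abs_signedStepDist (f : ℕ → Q → ℝ) (k : ℕ) (z x : Q) :
    |signedStepDist f k z x| = stepDist f z x := by
  rw [signedStepDist, apply_ite abs, abs_neg, ite_self, abs_of_nonneg (stepDist_nonneg f z x)]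

theorem stepDist_eq_of_signedStepDist_eq (h : signedStepDist f k z x = signedStepDist f k z y) :
    stepDist f z x = stepDist f z y := by
  rw [← abs_signedStepDist f k, h, abs_signedStepDist]

variable [TopologicalSpace Q]

theorem stepDist_term_le (hf : ∀ n, IsStepFunction (f n)) (z x : Q) (n : ℕ) :
    (1 / 2 : ℝ) ^ n * |f n x - f n z| ≤ (1 / 2 : ℝ) ^ n := by
  refine mul_le_of_le_one_right (by positivity) (abs_sub_le_iff.2 ⟨?_, ?_⟩) <;>
    linarith [((hf n).mem_Icc x).1, ((hf n).mem_Icc x).2, ((hf n).mem_Icc z).1,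
      ((hf n).mem_Icc z).2]

theorem summable_stepDist (hf : ∀ n, IsStepFunction (f n)) (z x : Q) :
    Summable fun n => (1 / 2 : ℝ) ^ n * |f n x - f n z| :=
  summable_geometric_two.of_nonneg_of_le (fun _ => by positivity) (stepDist_term_le hf z x)

theorem continuous_stepDist (hf : ∀ n, IsStepFunction (f n)) (z : Q) :
    Continuous (stepDist f z) := by
  refine continuous_tsum (fun n => ?_) summable_geometric_two fun n x => ?_
  · exact continuous_const.mul ((hf n).continuous.sub continuous_const).abs
  · rw [Real.norm_of_nonneg (by positivity)]
    exact stepDist_term_le hf z x n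

theorem stepDist_lt_of_mem_uIcc [PreconnectedSpace Q] (hf : ∀ n, IsStepFunction (f n))
    (hx : f k x ∈ Ioo 0 1) (hxyz : f k x ∈ uIcc (f k z) (f k y)) (hxy : x ≠ y) :
    stepDist f z x < stepDist f z y := by
  refine (summable_stepDist hf z x).tsum_lt_tsum (i := k) (fun n => ?_) ?_
    (summable_stepDist hf z y)
  · gcongr ?_ * ?_
    exact abs_sub_left_of_mem_uIcc ((hf k).mem_uIcc (hf n) hx hxyz)
  · have hne : f k x ≠ f k y := fun h => hxy ((hf k).eq_of_apply_eq hx h)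
    gcongr ?_ * ?_
    grind [mem_uIcc]

theorem stepDist_pos [PreconnectedSpace Q] (hf : ∀ n, IsStepFunction (f n))
    (hz : f k z ∈ Ioo 0 1) (hxz : x ≠ z) : 0 < stepDist f z x :=
  (stepDist_self f z).symm.trans_lt (stepDist_lt_of_mem_uIcc hf hz left_mem_uIcc hxz.symm)

theorem eq_of_stepDist_eq [PreconnectedSpace Q] (hf : ∀ n, IsStepFunction (f n))
    (hx : f k x ∈ Ioo 0 1) (hy : f k y ∈ Ioo 0 1) (hside : f k z ≤ f k x ↔ f k z ≤ f k y)
    (heq : stepDist f z x = stepDist f z y) : x = y := by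
  by_contra hxy
  have hbetween : f k x ∈ uIcc (f k z) (f k y) ∨ f k y ∈ uIcc (f k z) (f k x) := by
    simp only [mem_uIcc]
    grind
  rcases hbetween with h | h
  · exact (stepDist_lt_of_mem_uIcc hf hx h hxy).ne heq
  · exact (stepDist_lt_of_mem_uIcc hf hy h (Ne.symm hxy)).ne' heq

theorem signedStepDist_nonneg_iff [PreconnectedSpace Q] (hf : ∀ n, IsStepFunction (f n))
    (hz : f k z ∈ Ioo 0 1) : 0 ≤ signedStepDist f k z x ↔ f k z ≤ f k x := by
  rw [signedStepDist]
  split_ifs with h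
  · exact iff_of_true (stepDist_nonneg f z x) h
  · have hxz : x ≠ z := fun hxz => h (hxz ▸ le_rfl)
    exact iff_of_false (neg_lt_zero.2 (stepDist_pos hf hz hxz)).not_ge h

theorem continuous_signedStepDist (hf : ∀ n, IsStepFunction (f n)) (hz : f k z ∈ Ioo 0 1) :
    Continuous (signedStepDist f k z) := by
  refine (continuous_stepDist hf z).if_le (continuous_stepDist hf z).neg continuous_const
    (hf k).continuous fun x hx => ?_
  rw [← (hf k).eq_of_apply_eq hz hx, stepDist_self, neg_zero]

theorem exists_arc_injOn_signedStepDist [PreconnectedSpace Q]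
    (hf : ∀ n, IsStepFunction (f n)) (hcover : ∀ q, ∃ n, f n q ∈ Ioo 0 1)
    (hz : f k z ∈ Ioo 0 1) (q : Q) :
    ∃ ε : ℝ → Q, IsOpenEmbedding ε ∧ q ∈ range ε ∧ InjOn (signedStepDist f k z) (range ε) := by
  suffices h : ∃ n a b, 0 ≤ a ∧ b ≤ 1 ∧ f n q ∈ Ioo a b ∧
      InjOn (signedStepDist f k z) (f n ⁻¹' Ioo a b) by
    obtain ⟨n, a, b, ha, hb, hq, hinj⟩ := h
    obtain ⟨ε, hε, hrange⟩ := (hf n).exists_isOpenEmbedding_range_eq ha (hq.1.trans hq.2) hb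
    exact ⟨ε, hε, hrange ▸ hq, hrange ▸ hinj⟩
  obtain rfl | hqz := eq_or_ne q z
  · refine ⟨k, 0, 1, le_rfl, le_rfl, hz, fun x hx y hy hxy => ?_⟩
    refine eq_of_stepDist_eq hf hx hy ?_ (stepDist_eq_of_signedStepDist_eq hxy)
    rw [← signedStepDist_nonneg_iff hf hz, ← signedStepDist_nonneg_iff hf hz, hxy]
  obtain ⟨n, hn⟩ := hcover q
  rcases lt_or_gt_of_ne fun h => hqz ((hf n).eq_of_apply_eq hn h) with hlt | hgt
  · refine ⟨n, 0, f n z, le_rfl, ((hf n).mem_Icc z).2, ⟨hn.1, hlt⟩, fun x hx y hy hxy => ?_⟩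
    have hz1 := ((hf n).mem_Icc z).2
    exact eq_of_stepDist_eq hf ⟨hx.1, hx.2.trans_le hz1⟩ ⟨hy.1, hy.2.trans_le hz1⟩
      (iff_of_false hx.2.not_ge hy.2.not_ge) (stepDist_eq_of_signedStepDist_eq hxy)
  · refine ⟨n, f n z, 1, ((hf n).mem_Icc z).1, le_rfl, ⟨hgt, hn.2⟩, fun x hx y hy hxy => ?_⟩
    have hz0 := ((hf n).mem_Icc z).1
    exact eq_of_stepDist_eq hf ⟨hz0.trans_lt hx.1, hx.2⟩ ⟨hz0.trans_lt hy.1, hy.2⟩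
      (iff_of_true hx.1.le hy.1.le) (stepDist_eq_of_signedStepDist_eq hxy)

end StepDistance

section OneManifold

open Topology

variable {Q : Type*} [TopologicalSpace Q] {G : Q → ℝ}

theorem isLocalHomeomorph_of_injOn_arcs (hG : Continuous G)
    (harc : ∀ q, ∃ ε : ℝ → Q, IsOpenEmbedding ε ∧ q ∈ range ε ∧ InjOn G (range ε)) :
    IsLocalHomeomorph G := by
  refine IsLocalHomeomorph.mk G fun q => ?_
  obtain ⟨ε, hε, hq, hinj⟩ := harc q
  have hGε : IsOpenEmbedding (G ∘ ε) :=
    isOpenEmbedding_of_continuous_injective (hG.comp hε.continuous)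
      fun s t hst =>
        hε.injective (hinj (mem_range_self s) (mem_range_self t) hst)
  refine ⟨hε.toOpenPartialHomeomorph.symm.trans hGε.toOpenPartialHomeomorph, ?_, ?_⟩
  · simpa using hq
  · rintro _ ⟨⟨t, -, rfl⟩, -⟩
    exact congrArg (G ∘ ε) (hε.toOpenPartialHomeomorph_left_inv).symm

theorem nonempty_homeomorph_real_of_isOpenEmbedding [ConnectedSpace Q] (hG : IsOpenEmbedding G) :
    Nonempty (Q ≃ₜ ℝ) := by
  obtain ⟨e, he, -, he_range⟩ := exists_isOpenEmbedding_range_eq_ball (0 : ℝ) one_pos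
  have heG := he.comp hG
  have hconvex : Convex ℝ (range (e ∘ G)) := (isPreconnected_range heG.continuous).convex
  have hbdd : Bornology.IsBounded (range (e ∘ G)) :=
    isBounded_ball.subset ((range_comp_subset_range G e).trans he_range.subset)
  have hne : (interior (range (e ∘ G))).Nonempty := by
    rw [heG.isOpen_range.interior_eq]
    exact range_nonempty _
  obtain ⟨φ, hφ, -⟩ :=
    exists_homeomorph_image_interior_closure_frontier_eq_unitBall hconvex hne hbdd
  rw [heG.isOpen_range.interior_eq, ← he_range, ← range_comp] at hφ
  exact ⟨(φ.isEmbedding.comp heG.isEmbedding).toHomeomorph.trans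
    ((Homeomorph.setCongr hφ).trans he.isEmbedding.toHomeomorph.symm)⟩

variable [T2Space Q]

/- On the interval where the images of `U` and `V` meet, the inverses of `G` on `U` and on `V` are
continuous sections of `G` which agree somewhere, hence everywhere. -/
theorem injOn_union_of_isLocalHomeomorph (hG : IsLocalHomeomorph G) {U V : Set Q}
    (hU : IsOpen U) (hV : IsOpen V) (hUc : IsPreconnected U) (hVc : IsPreconnected V)
    (hUi : InjOn G U) (hVi : InjOn G V) (hUV : (U ∩ V).Nonempty) : InjOn G (U ∪ V) := by
  obtain ⟨w, hwU, hwV⟩ := hUV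
  have : Nonempty Q := ⟨w⟩
  have hsection : ∀ {N : Set Q}, IsOpen N → InjOn G N →
      ContinuousOn (Function.invFunOn G N) (G '' N) := fun hN hi =>
    (hG.isOpenMap.domRestrict hN).continuousOn_image_of_leftInvOn hi.leftInvOn_invFunOn
  have hpre : IsPreconnected (G '' U ∩ G '' V) :=
    ((hUc.image G hG.continuous.continuousOn).ordConnected.inter
      (hVc.image G hG.continuous.continuousOn).ordConnected).isPreconnected
  have hagree : EqOn (Function.invFunOn G U) (Function.invFunOn G V) (G '' U ∩ G '' V) :=
    (T2Space.isSeparatedMap G).eqOn_of_comp_eqOn hG.isLocallyInjective hpre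
      ((hsection hU hUi).mono inter_subset_left) ((hsection hV hVi).mono inter_subset_right)
      (fun t ht => (Function.invFunOn_eq ht.1).trans (Function.invFunOn_eq ht.2).symm)
      ⟨mem_image_of_mem G hwU, mem_image_of_mem G hwV⟩
      ((hUi.leftInvOn_invFunOn hwU).trans (hVi.leftInvOn_invFunOn hwV).symm)
  have hcross : ∀ x ∈ U, ∀ y ∈ V, G x = G y → x = y := fun x hx y hy hxy => by
    rw [← hUi.leftInvOn_invFunOn hx, ← hVi.leftInvOn_invFunOn hy, ← hxy]
    exact hagree ⟨mem_image_of_mem G hx, hxy ▸ mem_image_of_mem G hy⟩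
  rintro x (hx | hx) y (hy | hy) hxy
  exacts [hUi hx hy hxy, hcross x hx y hy hxy, (hcross y hy x hx hxy.symm).symm, hVi hx hy hxy]

theorem injective_of_isLocalHomeomorph_real [PreconnectedSpace Q] (hG : IsLocalHomeomorph G) :
    Function.Injective G := by
  let P : Q → Q → Prop := fun x y =>
    ∃ U, IsOpen U ∧ IsPreconnected U ∧ InjOn G U ∧ x ∈ U ∧ y ∈ U
  have : Std.Symm P := ⟨fun x y ⟨U, hU, hUc, hUi, hx, hy⟩ => ⟨U, hU, hUc, hUi, hy, hx⟩⟩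
  intro x y hxy
  obtain ⟨U, -, -, hUi, hx, hy⟩ : P x y := by
    refine PreconnectedSpace.induction₂ P (fun x => ?_) ⟨fun x y z hxy hyz => ?_⟩ x y
    · obtain ⟨e, hxe, rfl⟩ := hG x
      obtain ⟨δ, hδ, hball⟩ := isOpen_iff.1 e.open_target (e x) (e.map_source hxe)
      have hW : IsOpen (e.symm '' ball (e x) δ) :=
        e.symm.isOpen_image_of_subset_source isOpen_ball hball
      have hxW : x ∈ e.symm '' ball (e x) δ := ⟨e x, mem_ball_self hδ, e.left_inv hxe⟩
      filter_upwards [hW.mem_nhds hxW] with y hy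
      refine ⟨_, hW, ?_, e.injOn.mono ?_, hxW, hy⟩
      · exact (convex_ball (e x) δ).isPreconnected.image _ (e.continuousOn_symm.mono hball)
      · exact image_subset_iff.2 fun t ht => e.map_target (hball ht)
    · obtain ⟨U, hU, hUc, hUi, hxU, hyU⟩ := hxy
      obtain ⟨V, hV, hVc, hVi, hyV, hzV⟩ := hyz
      exact ⟨U ∪ V, hU.union hV, hUc.union y hyU hyV hVc,
        injOn_union_of_isLocalHomeomorph hG hU hV hUc hVc hUi hVi ⟨y, hyU, hyV⟩,
        Or.inl hxU, Or.inr hzV⟩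
  exact hUi hx hy hxy

theorem nonempty_homeomorph_real_of_isStepFunction [ConnectedSpace Q] [SecondCountableTopology Q]
    (hstep : ∀ q : Q, ∃ f, IsStepFunction f ∧ f q ∈ Ioo 0 1) : Nonempty (Q ≃ₜ ℝ) := by
  obtain ⟨z⟩ := (inferInstance : Nonempty Q)
  choose F hF hFq using hstep
  obtain ⟨s, hs, hs_univ⟩ := TopologicalSpace.countable_cover_nhds fun q =>
    (isOpen_Ioo.preimage (hF q).continuous).mem_nhds (hFq q)
  rw [iUnion₂_eq_univ_iff] at hs_univ
  obtain ⟨i, hi⟩ := hs.exists_eq_range (let ⟨q, hq, _⟩ := hs_univ z; ⟨q, hq⟩)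
  have hf : ∀ n, IsStepFunction (F (i n)) := fun n => hF (i n)
  have hcover : ∀ q, ∃ n, F (i n) q ∈ Ioo 0 1 := fun q => by
    obtain ⟨_, hx, hq⟩ := hs_univ q
    obtain ⟨n, rfl⟩ := hi ▸ hx
    exact ⟨n, hq⟩
  obtain ⟨k, hk⟩ := hcover z
  have hlocal : IsLocalHomeomorph (signedStepDist (fun n => F (i n)) k z) := by
    refine isLocalHomeomorph_of_injOn_arcs (continuous_signedStepDist hf hk) fun q => ?_
    exact exists_arc_injOn_signedStepDist hf hcover hk q
  exact nonempty_homeomorph_real_of_isOpenEmbedding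
    (hlocal.isOpenEmbedding_of_injective (injective_of_isLocalHomeomorph_real hlocal))

end OneManifold

section LineFibration

open Topology

/-- Through every point there is a section of `p` defined and continuous near the value of `p`. -/
def HasLocalSections {X Y : Type*} [TopologicalSpace X] [TopologicalSpace Y] (p : X → Y) : Prop :=
  ∀ x, ∃ s : Y → X, s (p x) = x ∧ ∀ᶠ c in 𝓝 (p x), ContinuousAt s c ∧ p (s c) = c

variable {X : Type} [MetricSpace X] {p u v : X → ℝ} {S T : Set ℝ}

/-- Every fiber of `p` is a geodesic line. -/
def FibersAreLines (p : X → ℝ) : Prop :=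
  ∀ c, ∃ γ : ℝ → X, IsLine γ ∧ range γ = p ⁻¹' {c}

/-- Over the set `S`, the function `u` is a continuous arc length coordinate on the fibers
of `p`. -/
structure IsFiberIsometryOn (p u : X → ℝ) (S : Set ℝ) : Prop where
  continuousOn : ContinuousOn u (p ⁻¹' S)
  dist_eq : ∀ ⦃x y⦄, p x ∈ S → p x = p y → dist (u x) (u y) = dist x y

theorem IsFiberIsometryOn.mono (hu : IsFiberIsometryOn p u T) (hST : S ⊆ T) :
    IsFiberIsometryOn p u S where
  continuousOn := hu.continuousOn.mono (preimage_mono hST)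
  dist_eq _ _ hx := hu.dist_eq (hST hx)

theorem surjective_of_isometry_real {g : ℝ → ℝ} (hg : Isometry g) : Function.Surjective g :=
  (hg.affineIsometryOfStrictConvexSpace.toAffineIsometryEquiv rfl).surjective

theorem IsFiberIsometryOn.bijOn (hu : IsFiberIsometryOn p u S) (hp : FibersAreLines p) {b : ℝ}
    (hb : b ∈ S) : BijOn u (p ⁻¹' {b}) univ := by
  obtain ⟨γ, hγ, hrange⟩ := hp b
  have hpγ : ∀ t, p (γ t) = b := fun t => hrange.subset (mem_range_self t)
  refine ⟨mapsTo_univ _ _, fun x hx y hy hxy => ?_, fun a _ => ?_⟩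
  · rw [← dist_eq_zero, ← hu.dist_eq (hx.symm ▸ hb) (hx.trans hy.symm), hxy, dist_self]
  · have hisom : Isometry (u ∘ γ) := Isometry.of_dist_eq fun s t => by
      rw [Function.comp_apply, Function.comp_apply,
        hu.dist_eq ((hpγ s).symm ▸ hb) ((hpγ s).trans (hpγ t).symm), hγ.isometry.dist_eq]
    obtain ⟨t, ht⟩ := surjective_of_isometry_real hisom a
    exact ⟨γ t, hpγ t, ht⟩

theorem IsFiberIsometryOn.glue (hpc : Continuous p) (hp : FibersAreLines p)
    (hu : IsFiberIsometryOn p u S) (hv : IsFiberIsometryOn p v T) (hS : IsClosed S)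
    (hT : IsClosed T) {b : ℝ} (hST : S ∩ T = {b}) :
    ∃ w, IsFiberIsometryOn p w (S ∪ T) ∧ EqOn w u (p ⁻¹' S) := by
  classical
  obtain ⟨hbS, hbT⟩ : b ∈ S ∩ T := hST ▸ mem_singleton b
  have : Nonempty X := let ⟨γ, _⟩ := hp b; ⟨γ 0⟩
  have hbij := hv.bijOn hp hbT
  set σ := Function.invFunOn v (p ⁻¹' {b})
  have hpσ : ∀ t, p (σ t) = b := fun t => Function.invFunOn_mem (hbij.surjOn (mem_univ t))
  have hvσ : ∀ t, v (σ t) = t := fun t => Function.invFunOn_eq (hbij.surjOn (mem_univ t))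
  have hisom : Isometry (u ∘ σ) := Isometry.of_dist_eq fun s t => by
    rw [Function.comp_apply, Function.comp_apply,
      hu.dist_eq ((hpσ s).symm ▸ hbS) ((hpσ s).trans (hpσ t).symm),
      ← hv.dist_eq ((hpσ s).symm ▸ hbT) ((hpσ s).trans (hpσ t).symm), hvσ, hvσ]
  let w := (p ⁻¹' S).piecewise u (u ∘ σ ∘ v)
  have hwS : EqOn w u (p ⁻¹' S) := piecewise_eqOn _ _ _
  have hwT : EqOn w (u ∘ σ ∘ v) (p ⁻¹' T) := fun x hxT => by
    by_cases hxS : p x ∈ S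
    · have hxb : p x = b := hST.subset ⟨hxS, hxT⟩
      rw [hwS hxS]
      exact congrArg u (hbij.injOn.leftInvOn_invFunOn hxb).symm
    · exact piecewise_eq_of_notMem _ _ _ hxS
  refine ⟨w, ⟨?_, fun x y hx hxy => ?_⟩, hwS⟩
  · exact (hu.continuousOn.congr hwS).union_of_isClosed
      ((hisom.continuous.comp_continuousOn hv.continuousOn).congr hwT)
      (hS.preimage hpc) (hT.preimage hpc)
  · rcases hx with hx | hx
    · rw [hwS hx, hwS (show p y ∈ S from hxy ▸ hx), hu.dist_eq hx hxy]
    · rw [hwT hx, hwT (show p y ∈ T from hxy ▸ hx)]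
      exact (hisom.dist_eq _ _).trans (hv.dist_eq hx hxy)

/-- The arc length coordinate of `z` on a line through `a` and `b`, with origin the midpoint of
`a` and `b`, expressed through distances only. -/
noncomputable def twoPointCoord (a b z : X) : ℝ :=
  (dist z a ^ 2 - dist z b ^ 2) / (2 * dist a b)

theorem IsLine.dist_twoPointCoord {γ : ℝ → X} (hγ : IsLine γ) {a b x y : X} (ha : a ∈ range γ)
    (hb : b ∈ range γ) (hab : a ≠ b) (hx : x ∈ range γ) (hy : y ∈ range γ) :
    dist (twoPointCoord a b x) (twoPointCoord a b y) = dist x y := by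
  obtain ⟨s, rfl⟩ := ha
  obtain ⟨t, rfl⟩ := hb
  obtain ⟨x, rfl⟩ := hx
  obtain ⟨y, rfl⟩ := hy
  have hst : s - t ≠ 0 := sub_ne_zero.2 fun h => hab (h ▸ rfl)
  have hdiff : twoPointCoord (γ s) (γ t) (γ x) - twoPointCoord (γ s) (γ t) (γ y) =
      (t - s) * (x - y) / |s - t| := by
    have hne : |s - t| ≠ 0 := abs_ne_zero.2 hst
    simp only [twoPointCoord, hγ _ _, sq_abs]
    field_simp
    ring
  rw [Real.dist_eq, hdiff, hγ, abs_div, abs_mul, abs_abs, abs_sub_comm t s,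
    mul_div_cancel_left₀ _ (abs_ne_zero.2 hst)]

theorem FibersAreLines.exists_isFiberIsometryOn_nhds (hp : FibersAreLines p) (hpc : Continuous p)
    (hsec : HasLocalSections p) (c : ℝ) : ∃ S ∈ 𝓝 c, ∃ u, IsFiberIsometryOn p u S := by
  obtain ⟨γ, hγ, hrange⟩ := hp c
  have hpγ : ∀ t, p (γ t) = c := fun t => hrange.subset (mem_range_self t)
  obtain ⟨s₀, hs₀, hs₀'⟩ := hsec (γ 0)
  obtain ⟨s₁, hs₁, hs₁'⟩ := hsec (γ 1)
  rw [hpγ] at hs₀ hs₀' hs₁ hs₁'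
  have hne : ∀ᶠ t in 𝓝 c, s₀ t ≠ s₁ t := by
    refine (hs₀'.self_of_nhds.1.prodMk hs₁'.self_of_nhds.1).eventually
      (isOpen_ne_fun continuous_fst continuous_snd |>.mem_nhds ?_)
    simpa only [hs₀, hs₁, mem_ofPred_eq] using hγ.isometry.injective.ne zero_ne_one
  refine ⟨_, (hs₀'.and hs₁').and hne, fun z => twoPointCoord (s₀ (p z)) (s₁ (p z)) z, ?_, ?_⟩
  · rintro z ⟨⟨⟨h₀, -⟩, h₁, -⟩, hz⟩
    have h₀' : ContinuousAt (fun z => s₀ (p z)) z := h₀.comp hpc.continuousAt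
    have h₁' : ContinuousAt (fun z => s₁ (p z)) z := h₁.comp hpc.continuousAt
    have hcont : ContinuousAt (fun z => twoPointCoord (s₀ (p z)) (s₁ (p z)) z) z :=
      (((continuousAt_id.dist h₀').pow 2).sub ((continuousAt_id.dist h₁').pow 2)).div
        (continuousAt_const.mul (h₀'.dist h₁')) (mul_ne_zero two_ne_zero (dist_ne_zero.2 hz))
    exact hcont.continuousWithinAt
  · rintro x y ⟨⟨⟨-, h₀⟩, -, h₁⟩, hx⟩ hxy
    obtain ⟨η, hη, hη_range⟩ := hp (p x)
    rw [← hxy]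
    exact hη.dist_twoPointCoord (hη_range.superset h₀) (hη_range.superset h₁) hx
      (hη_range.superset rfl) (hη_range.superset hxy.symm)

theorem FibersAreLines.exists_isFiberIsometryOn_Icc (hp : FibersAreLines p) (hpc : Continuous p)
    (hsec : HasLocalSections p) {a b : ℝ} (hab : a ≤ b) : ∃ u, IsFiberIsometryOn p u (Icc a b) := by
  choose S hS w hw using hp.exists_isFiberIsometryOn_nhds hpc hsec
  obtain ⟨t, ht0, htm, ⟨m, hm⟩, hcover⟩ := exists_monotone_Icc_subset_open_cover_Icc hab
    (c := fun c => (Subtype.val : Icc a b → ℝ) ⁻¹' interior (S c))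
    (fun c => isOpen_interior.preimage continuous_subtype_val)
    fun x _ => mem_iUnion.2 ⟨x, mem_interior_iff_mem_nhds.2 (hS x)⟩
  have hpiece : ∀ n, ∃ u, IsFiberIsometryOn p u (Icc (t n) (t (n + 1))) := fun n => by
    obtain ⟨c, hc⟩ := hcover n
    refine ⟨w c, (hw c).mono fun x hx => ?_⟩
    have hx' : x ∈ Icc a b := ⟨(t n).2.1.trans hx.1, hx.2.trans (t (n + 1)).2.2⟩
    exact interior_subset (hc (show (⟨x, hx'⟩ : Icc a b) ∈ Icc (t n) (t (n + 1)) from hx))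
  have hinit : ∀ n, ∃ u, IsFiberIsometryOn p u (Icc (t 0) (t (n + 1))) := fun n => by
    induction n with
    | zero => exact hpiece 0
    | succ n ih =>
      obtain ⟨u, hu⟩ := ih
      obtain ⟨v, hv⟩ := hpiece (n + 1)
      have h0 : (t 0 : ℝ) ≤ t (n + 1) := htm (Nat.zero_le _)
      have h1 : (t (n + 1) : ℝ) ≤ t (n + 1 + 1) := htm (Nat.le_succ _)
      obtain ⟨w, hw, -⟩ := hu.glue hpc hp hv isClosed_Icc isClosed_Icc
        (Icc_inter_Icc_eq_singleton h0 h1)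
      exact ⟨w, Icc_union_Icc_eq_Icc h0 h1 ▸ hw⟩
  simpa only [ht0, hm (m + 1) (Nat.le_succ m)] using hinit m

theorem IsFiberIsometryOn.exists_extension_succ (hp : FibersAreLines p) (hpc : Continuous p)
    (hsec : HasLocalSections p) {n : ℕ} (hu : IsFiberIsometryOn p u (Icc (-n) n)) :
    ∃ w, IsFiberIsometryOn p w (Icc (-(n + 1 : ℕ)) (n + 1 : ℕ)) ∧ EqOn w u (p ⁻¹' Icc (-n) n) := by
  have hn : -(n : ℝ) ≤ n := neg_le_self n.cast_nonneg
  have hn1 : (n : ℝ) ≤ (n + 1 : ℕ) := by exact_mod_cast n.le_succ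
  obtain ⟨u₁, hu₁⟩ := hp.exists_isFiberIsometryOn_Icc hpc hsec hn1
  obtain ⟨u₂, hu₂⟩ := hp.exists_isFiberIsometryOn_Icc hpc hsec (neg_le_neg hn1)
  obtain ⟨v, hv, hvu⟩ := hu.glue hpc hp hu₁ isClosed_Icc isClosed_Icc
    (Icc_inter_Icc_eq_singleton hn hn1)
  rw [Icc_union_Icc_eq_Icc hn hn1] at hv
  obtain ⟨w, hw, hwv⟩ := hv.glue hpc hp hu₂ isClosed_Icc isClosed_Icc
    (inter_comm _ _ ▸ Icc_inter_Icc_eq_singleton (neg_le_neg hn1) (hn.trans hn1))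
  rw [union_comm, Icc_union_Icc_eq_Icc (neg_le_neg hn1) (hn.trans hn1)] at hw
  exact ⟨w, hw, (hwv.mono (preimage_mono (Icc_subset_Icc_right hn1))).trans hvu⟩

theorem FibersAreLines.exists_isFiberIsometryOn_univ (hp : FibersAreLines p) (hpc : Continuous p)
    (hsec : HasLocalSections p) : ∃ u, IsFiberIsometryOn p u univ := by
  have hextend : ∀ (n : ℕ) (u : {u // IsFiberIsometryOn p u (Icc (-n) n)}),
      ∃ v : {v // IsFiberIsometryOn p v (Icc (-(n + 1 : ℕ)) (n + 1 : ℕ))},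
        EqOn v.1 u.1 (p ⁻¹' Icc (-n) n) := fun n u =>
    let ⟨w, hw, hwu⟩ := u.2.exists_extension_succ hp hpc hsec
    ⟨⟨w, hw⟩, hwu⟩
  choose next hnext using hextend
  obtain ⟨u₀, hu₀⟩ := hp.exists_isFiberIsometryOn_Icc hpc hsec
    (neg_le_self ((0 : ℕ).cast_nonneg : (0 : ℝ) ≤ (0 : ℕ)))
  let w : ∀ n : ℕ, {u // IsFiberIsometryOn p u (Icc (-n) n)} := Nat.rec ⟨u₀, hu₀⟩ next
  have hcompat : ∀ {m n : ℕ}, m ≤ n → EqOn (w n).1 (w m).1 (p ⁻¹' Icc (-m) m) := by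
    intro m n hmn
    induction n, hmn using Nat.le_induction with
    | base => exact eqOn_refl _ _
    | succ n hmn ih =>
      have hle : (m : ℝ) ≤ n := by exact_mod_cast hmn
      exact ((hnext n (w n)).mono (preimage_mono (Icc_subset_Icc (neg_le_neg hle) hle))).trans ih
  let u : X → ℝ := fun z => (w ⌈|p z|⌉₊).1 z
  have hu : ∀ n : ℕ, EqOn u (w n).1 (p ⁻¹' Icc (-n) n) := fun n z hz =>
    (hcompat (Nat.ceil_le.2 (abs_le.2 hz)) (abs_le.1 (Nat.le_ceil _))).symm
  refine ⟨u, continuousOn_of_locally_continuousOn fun x _ => ?_, fun x y _ hxy => ?_⟩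
  · obtain ⟨n, hn⟩ := exists_nat_gt |p x|
    refine ⟨p ⁻¹' Ioo (-n) n, isOpen_Ioo.preimage hpc, abs_lt.1 hn, ?_⟩
    exact ((w n).2.continuousOn.congr (hu n)).mono fun z hz => Ioo_subset_Icc_self hz.2
  · obtain ⟨n, hn⟩ := exists_nat_ge |p x|
    have hx : p x ∈ Icc (-n : ℝ) n := abs_le.1 hn
    rw [hu n hx, hu n (show p y ∈ Icc (-n : ℝ) n from hxy ▸ hx), (w n).2.dist_eq hx hxy]

theorem FibersAreLines.exists_homeomorph_prod (hp : FibersAreLines p) (hpc : Continuous p)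
    (hsec : HasLocalSections p) : ∃ h : X ≃ₜ ℝ × ℝ, ∀ x, (h x).2 = p x := by
  obtain ⟨u, hu⟩ := hp.exists_isFiberIsometryOn_univ hpc hsec
  have hbij : ∀ c, BijOn u (p ⁻¹' {c}) univ := fun c => hu.bijOn hp (mem_univ c)
  have hbijective : Function.Bijective fun x => (u x, p x) := by
    refine ⟨fun x y hxy => ?_, fun ⟨a, c⟩ => ?_⟩
    · obtain ⟨hu_eq, hp_eq⟩ := Prod.mk.inj hxy
      exact (hbij (p y)).injOn hp_eq rfl hu_eq
    · obtain ⟨x, hx, rfl⟩ := (hbij c).surjOn (mem_univ a)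
      exact ⟨x, Prod.ext rfl hx⟩
  let H : X ≃ ℝ × ℝ := Equiv.ofBijective _ hbijective
  have huH : ∀ q, u (H.symm q) = q.1 := fun q => congrArg Prod.fst (H.apply_symm_apply q)
  have hpH : ∀ q, p (H.symm q) = q.2 := fun q => congrArg Prod.snd (H.apply_symm_apply q)
  have hu_cont : Continuous u := by
    simpa only [preimage_univ, continuousOn_univ] using hu.continuousOn
  refine ⟨⟨H, hu_cont.prodMk hpc, continuous_iff_continuousAt.2 fun q => ?_⟩, fun x => rfl⟩
  obtain ⟨s, hs, hs'⟩ := hsec (H.symm q)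
  rw [hpH] at hs hs'
  have hs_tendsto : Tendsto (fun q' : ℝ × ℝ => s q'.2) (𝓝 q) (𝓝 (H.symm q)) := by
    have := hs'.self_of_nhds.1.tendsto.comp (continuous_snd.tendsto q)
    rwa [hs] at this
  refine tendsto_of_tendsto_of_dist hs_tendsto ?_
  have hdist : ∀ᶠ q' : ℝ × ℝ in 𝓝 q, dist (u (s q'.2)) q'.1 = dist (s q'.2) (H.symm q') := by
    filter_upwards [(continuous_snd.tendsto q).eventually hs'] with q' hq'
    rw [← hu.dist_eq (mem_univ _) (hq'.2.trans (hpH q').symm), huH]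
  refine Tendsto.congr' hdist ?_
  have := ((hu_cont.tendsto _).comp hs_tendsto).dist (continuous_fst.tendsto q)
  rwa [huH, dist_self] at this

end LineFibration

section LeafSpace

open Topology

theorem locallyPathConnectedSpace_of_forall_isOpenEmbedding {X Y : Type*} [TopologicalSpace X]
    [TopologicalSpace Y] [LocallyPathConnectedSpace Y]
    (h : ∀ x : X, ∃ ψ : Y → X, IsOpenEmbedding ψ ∧ x ∈ range ψ) :
    LocallyPathConnectedSpace X := by
  refine ⟨fun x => hasBasis_self.2 fun s hs => ?_⟩
  obtain ⟨ψ, hψ, y, rfl⟩ := h x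
  obtain ⟨u, ⟨hu, hu_conn⟩, hus⟩ := (path_connected_basis y).mem_iff.1
    (hψ.continuous.continuousAt.preimage_mem_nhds hs)
  exact ⟨ψ '' u, hψ.isOpenMap.image_mem_nhds hu, hu_conn.image hψ.continuous,
    image_subset_iff.2 hus⟩

variable {X : Type} [MetricSpace X] {r : Setoid X}

theorem LeavesAreLines.isPreconnected_preimage_mk (hline : LeavesAreLines r) (q : Quotient r) :
    IsPreconnected (Quotient.mk r ⁻¹' {q}) := by
  obtain ⟨x, rfl⟩ := Quotient.mk_surjective q
  obtain ⟨γ, hγ, hrange⟩ := hline x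
  have hfiber : Quotient.mk r ⁻¹' {Quotient.mk r x} = range γ := by
    rw [hrange]
    exact ext fun y => Quotient.eq.trans r.comm'
  exact hfiber ▸ isPreconnected_range hγ.isometry.continuous

theorem LeavesAreLines.exists_isStepFunction_mem_Ioo [SimplyConnectedSpace X]
    (hline : LeavesAreLines r) (hchart : HasFoliatedCharts r) (q : Quotient r) :
    ∃ f : Quotient r → ℝ, IsStepFunction f ∧ f q ∈ Ioo 0 1 := by
  obtain ⟨x, rfl⟩ := Quotient.mk_surjective q
  have : LocallyPathConnectedSpace X := locallyPathConnectedSpace_of_forall_isOpenEmbedding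
    fun x => (hchart x).imp fun ψ h => ⟨h.1.isOpenEmbedding, h.2⟩
  have : T2Space (Quotient r) :=
    hline.t2Space_quotient (hchart.isOpenMap_mk hline.hasEmbeddedLeaves)
  obtain ⟨τ, -, hτ₀, hτ⟩ := hline.exists_transversal hchart x
  obtain ⟨f, hf, hfτ⟩ := exists_isStepFunction
    (hchart.isOpenQuotientMap_mk hline.hasEmbeddedLeaves).isQuotientMap
    hline.isPreconnected_preimage_mk (hτ.comp (Homeomorph.subRight (1 / 2 : ℝ)).isOpenEmbedding)
  have hfx : f (Quotient.mk r x) = 1 / 2 := by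
    simpa [hτ₀] using hfτ (1 / 2) (by norm_num)
  exact ⟨f, hf, by rw [hfx]; norm_num⟩

theorem LeavesAreLines.nonempty_quotient_homeomorph_real [SimplyConnectedSpace X]
    [SecondCountableTopology X] (hline : LeavesAreLines r) (hchart : HasFoliatedCharts r) :
    Nonempty (Quotient r ≃ₜ ℝ) := by
  have hmk := hchart.isOpenQuotientMap_mk hline.hasEmbeddedLeaves
  have : T2Space (Quotient r) := hline.t2Space_quotient hmk.isOpenMap
  have : SecondCountableTopology (Quotient r) :=
    hmk.isQuotientMap.secondCountableTopology hmk.isOpenMap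
  exact nonempty_homeomorph_real_of_isStepFunction (hline.exists_isStepFunction_mem_Ioo hchart)

theorem hasLocalSections_of_forall_transversal {X Y : Type*} [TopologicalSpace X]
    [TopologicalSpace Y] {p : X → Y}
    (h : ∀ x, ∃ τ : ℝ → X, Continuous τ ∧ τ 0 = x ∧ IsOpenEmbedding (p ∘ τ)) :
    HasLocalSections p := by
  intro x
  obtain ⟨τ, hτ, rfl, he⟩ := h x
  let e := he.toOpenPartialHomeomorph
  have htarget : e.target = range (p ∘ τ) := he.toOpenPartialHomeomorph_target
  have hmem : p (τ 0) ∈ range (p ∘ τ) := mem_range_self _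
  refine ⟨τ ∘ e.symm, congrArg τ (he.toOpenPartialHomeomorph_left_inv _), ?_⟩
  filter_upwards [he.isOpen_range.mem_nhds hmem] with c hc
  exact ⟨hτ.continuousAt.comp (e.continuousAt_symm (htarget ▸ hc)),
    he.toOpenPartialHomeomorph_right_inv _ hc⟩

end LeafSpace

theorem foliation_homeomorphic_standard_general {X : Type} [MetricSpace X]
    [SimplyConnectedSpace X] [SecondCountableTopology X] {r : Setoid X}
    (hline : LeavesAreLines r) (hchart : HasFoliatedCharts r) :
    ∃ h : X ≃ₜ ℝ × ℝ, ∀ L ∈ r.classes, ∃ c : ℝ, h '' L = {q | q.2 = c} := by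
  obtain ⟨θ⟩ := hline.nonempty_quotient_homeomorph_real hchart
  let p (x : X) : ℝ := θ (Quotient.mk r x)
  have hp {x y : X} : p x = p y ↔ r x y := θ.injective.eq_iff.trans Quotient.eq
  have hlines : FibersAreLines p := by
    intro c
    obtain ⟨x, rfl⟩ : ∃ x, p x = c := (θ.surjective.comp Quotient.mk_surjective) c
    simpa only [preimage, mem_singleton_iff, hp, r.comm'] using hline x
  have hsec : HasLocalSections p := hasLocalSections_of_forall_transversal fun x =>
    (hline.exists_transversal hchart x).imp fun τ h =>
      ⟨h.1, h.2.1, θ.isOpenEmbedding.comp h.2.2⟩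
  obtain ⟨h, hh⟩ := hlines.exists_homeomorph_prod
    (θ.continuous.comp continuous_quotient_mk') hsec
  refine ⟨h, ?_⟩
  rintro _ ⟨x, rfl⟩
  have hleaf : {y | r y x} = h ⁻¹' {q | q.2 = p x} := by
    ext y
    change r y x ↔ (h y).2 = p x
    rw [hh y, hp]
  exact ⟨p x, by rw [hleaf, h.image_preimage]⟩

namespace GeodesicLineFoliation

variable {S : RiemannianSurface} (F : GeodesicLineFoliation S)

theorem isPartition_leaves : Setoid.IsPartition F.leaves := by
  refine ⟨fun hempty => ?_, fun x => ?_⟩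
  · obtain ⟨γ, -, -, hγ⟩ := F.leaf_is_geodesic_line ∅ hempty
    exact (hγ ▸ mem_range_self 0 : γ 0 ∈ (∅ : Set S.M))
  · obtain ⟨L, hL, hx⟩ := F.covers x
    exact ⟨L, ⟨hL, hx⟩, fun L' h => F.eq_of_inter L' h.1 L hL ⟨x, h.2, hx⟩⟩

/-- The equivalence relation of lying on the same leaf. -/
def leafSetoid : Setoid S.M :=
  Setoid.mkClasses F.leaves F.isPartition_leaves.2

theorem classes_leafSetoid : F.leafSetoid.classes = F.leaves :=
  Setoid.classes_mkClasses F.leaves F.isPartition_leaves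

theorem leafSetoid_iff {L : Set S.M} (hL : L ∈ F.leaves) {x y : S.M} (hx : x ∈ L) :
    F.leafSetoid x y ↔ y ∈ L := by
  rw [F.leafSetoid.comm', Setoid.eq_eqv_class_of_mem F.isPartition_leaves.2 hL hx]
  rfl

theorem leavesAreLines_leafSetoid : LeavesAreLines F.leafSetoid := by
  intro x
  obtain ⟨L, hL, hx⟩ := F.covers x
  obtain ⟨γ, hγ, -, hrange⟩ := F.leaf_is_geodesic_line L hL
  exact ⟨γ, hγ, hrange.trans (ext fun _ => (F.leafSetoid_iff hL hx).symm)⟩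

theorem hasFoliatedCharts_leafSetoid : HasFoliatedCharts F.leafSetoid := by
  intro x
  obtain ⟨U, hU, hx, φ, hφ⟩ := F.locally_trivial x
  refine ⟨fun u => (φ.symm u).1, ⟨hU.isOpenEmbedding_subtypeVal.comp φ.symm.isOpenEmbedding,
    fun t t' c => ?_⟩, φ ⟨x, hx⟩, congrArg Subtype.val (φ.symm_apply_apply _)⟩
  obtain ⟨L, hL, hmem⟩ := hφ c
  exact (F.leafSetoid_iff hL (hmem t)).2 (hmem t')

end GeodesicLineFoliation

/-- Let `(M², g)` be a complete Riemannian surface homeomorphic to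
`ℝ²`, and let `F` be a foliation of `M` all of whose leaves are geodesic lines. Then
`F` is homeomorphic to the standard foliation of the Euclidean plane by parallel
straight lines: there is a homeomorphism of `M` onto `ℝ²` carrying each leaf of `F`
to a horizontal straight line. -/
theorem foliation_homeomorphic_standard
    (S : RiemannianSurface)
    (hplane : Nonempty (S.M ≃ₜ (ℝ × ℝ)))
    (F : GeodesicLineFoliation S) :
    ∃ h : S.M ≃ₜ (ℝ × ℝ), ∀ L ∈ F.leaves, ∃ c : ℝ,
      (h : S.M → ℝ × ℝ) '' L = {q : ℝ × ℝ | q.2 = c} := by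
  obtain ⟨h₀⟩ := hplane
  have := h₀.toHomotopyEquiv.simplyConnectedSpace
  have := h₀.secondCountableTopology
  rw [← F.classes_leafSetoid]
  exact foliation_homeomorphic_standard_general F.leavesAreLines_leafSetoid
    F.hasFoliatedCharts_leafSetoid
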